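/- Let 𝒫 be a type system on Ω whose associated equivalence relation ∼ is neither the trivial relation (equality) nor the universal relation (all addresses equivalent). Then Stab_V(𝒫) is a proper subgroup of Thompson's group V. -/

import Mathlib

/-!
An element of `Equiv.Perm Cantor` is a prefix substitution map as soon as it acts by prefix
substitution on cofinitely many addresses, and the partial action of a permutation on addresses is
injective. So the exceptional sets of two stabilizing elements combine to a finite exceptional set
for their product, which makes the stabilizer of *any* relation a subgroup.

For properness, suppose that all of `V` stabilizes a coherent, reduced and transitive relation `r`.
Coherence and reducedness propagate invariance from long addresses to all of them, so `r` is
invariant under the element of `V` swapping two disjoint cones. Hence if `r α β`, and the cones of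
`α`, `β`, `δ` are pairwise disjoint, then `r` relates `α` and `δ` in both directions. A related
pair `α ≠ β` yields three pairwise disjoint cones whose addresses are all related to each other.
A long address has its cone disjoint from two of the three, and is therefore related to them. Thus
all long addresses are related, and so are all addresses because `r` is reduced.
-/

/-- Addresses: finite words over the alphabet `{0,1}` (`Bool`). -/
abbrev Addr : Type := List Bool

/-- Cantor space: infinite words over the alphabet `{0,1}`. -/
abbrev Cantor : Type := ℕ → Bool

/-- Prepend the finite word `α` to the infinite word `w`. -/
def wcat (α : Addr) (w : Cantor) : Cantor := fun n =>
  if h : n < α.length then α.get ⟨n, h⟩ else w (n - α.length)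

/-- The cone of the address `α`: the set of infinite words having `α` as a prefix. -/
def cone (α : Addr) : Set Cantor := Set.range (wcat α)

/-- `g` is a prefix substitution map: there are partitions of Cantor space into cones
`(A i)𝔠` and `(B i)𝔠` such that `g` maps `(A i) w` to `(B i) w`. -/
def IsPrefixSubst (g : Equiv.Perm Cantor) : Prop :=
  ∃ (n : ℕ) (A B : Fin n → Addr),
    (∀ i j, i ≠ j → Disjoint (cone (A i)) (cone (A j))) ∧
    (⋃ i, cone (A i)) = Set.univ ∧
    (∀ i j, i ≠ j → Disjoint (cone (B i)) (cone (B j))) ∧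
    (⋃ i, cone (B i)) = Set.univ ∧
    (∀ i w, g (wcat (A i) w) = wcat (B i) w)

/-- Thompson's group `V`, as the set of prefix substitution maps inside `Equiv.Perm Cantor`. -/
def VSet : Set (Equiv.Perm Cantor) := { g | IsPrefixSubst g }

/-- `α ^ g = β` : `g` maps the cone of `α` onto the cone of `β` by the prefix
substitution `α ↦ β`. -/
def actsOn (g : Equiv.Perm Cantor) (α β : Addr) : Prop :=
  ∀ w, g (wcat α w) = wcat β w

/-- A subset of `Equiv.Perm Cantor` that is closed under the group operations. -/
def IsSubgroupSet (M : Set (Equiv.Perm Cantor)) : Prop :=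
  (1 : Equiv.Perm Cantor) ∈ M ∧ (∀ g ∈ M, ∀ h ∈ M, g * h ∈ M) ∧ ∀ g ∈ M, g⁻¹ ∈ M

/-- `M` is a maximal subgroup of Thompson's group `V`. -/
def IsMaximalSubgroupOfV (M : Set (Equiv.Perm Cantor)) : Prop :=
  IsSubgroupSet M ∧ M ⊆ VSet ∧ M ≠ VSet ∧
    ∀ H : Set (Equiv.Perm Cantor),
      IsSubgroupSet H → M ⊆ H → H ⊆ VSet → H = M ∨ H = VSet

/-- A relation on addresses is coherent if `α ∼ β` implies `α0 ∼ β0` and `α1 ∼ β1`. -/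
def Coherent (r : Addr → Addr → Prop) : Prop :=
  ∀ α β, r α β → r (α ++ [false]) (β ++ [false]) ∧ r (α ++ [true]) (β ++ [true])

/-- A relation on addresses is reduced if `α0 ∼ β0` and `α1 ∼ β1` imply `α ∼ β`. -/
def Reduced (r : Addr → Addr → Prop) : Prop :=
  ∀ α β, r (α ++ [false]) (β ++ [false]) → r (α ++ [true]) (β ++ [true]) → r α β

/-- A type system: a coherent and reduced equivalence relation on addresses
(identified with the partition of `Ω` into its classes). -/
def IsTypeSystem (r : Addr → Addr → Prop) : Prop :=
  Equivalence r ∧ Coherent r ∧ Reduced r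

/-- `g` fixes the parts of `r`: for all but finitely many addresses `α`, the image
`α ^ g` is defined and equivalent to `α`. -/
def FixesParts (r : Addr → Addr → Prop) (g : Equiv.Perm Cantor) : Prop :=
  { α : Addr | ¬ ∃ β, actsOn g α β ∧ r α β }.Finite

/-- `g` stabilizes `r`: on some cofinite set of addresses, `α ^ g` is defined and `g`
preserves equivalence and inequivalence of addresses. -/
def Stabilizes (r : Addr → Addr → Prop) (g : Equiv.Perm Cantor) : Prop :=
  ∃ Ω₀ : Set Addr, Ω₀ᶜ.Finite ∧ (∀ α ∈ Ω₀, ∃ β, actsOn g α β) ∧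
    ∀ α ∈ Ω₀, ∀ α' ∈ Ω₀, ∀ β β', actsOn g α β → actsOn g α' β' → (r α α' ↔ r β β')

/-- `Fix_V(𝒫)`: the elements of Thompson's group `V` fixing the parts of `r`. -/
def FixSet (r : Addr → Addr → Prop) : Set (Equiv.Perm Cantor) :=
  { g | IsPrefixSubst g ∧ FixesParts r g }

/-- `Stab_V(𝒫)`: the elements of Thompson's group `V` stabilizing `r`. -/
def StabSet (r : Addr → Addr → Prop) : Set (Equiv.Perm Cantor) :=
  { g | IsPrefixSubst g ∧ Stabilizes r g }

/-- The type system of `s` is a quotient of that of `r`. -/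
def IsQuotientOf (s r : Addr → Addr → Prop) : Prop :=
  IsTypeSystem s ∧ ∀ α β, r α β → s α β

/-- A simple type system: the universal relation is a proper quotient, and every
quotient is either the type system itself or the universal one. -/
def SimpleTS (r : Addr → Addr → Prop) : Prop :=
  IsTypeSystem r ∧ (∃ α β : Addr, ¬ r α β) ∧
    ∀ s : Addr → Addr → Prop, IsQuotientOf s r →
      (∀ α β, s α β ↔ r α β) ∨ ∀ α β, s α β

/-- The type (equivalence class) of the address `α`. -/
def typeOf (r : Addr → Addr → Prop) (α : Addr) : Set Addr := { β | r α β }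

open Filter

/-! ### Words and cones -/

theorem wcat_append (α β : Addr) (w : Cantor) : wcat (α ++ β) w = wcat α (wcat β w) := by
  funext n
  grind [wcat]

theorem wcat_right_injective (α : Addr) : Function.Injective (wcat α) := fun w v h => by
  funext n
  simpa [wcat] using congrFun h (n + α.length)

theorem prefix_of_wcat_eq {α β : Addr} {w v : Cantor} (h : wcat α w = wcat β v)
    (hl : α.length ≤ β.length) : α <+: β := by
  refine List.prefix_iff_getElem.2 ⟨hl, fun n hn => ?_⟩
  simpa [wcat, hn, hn.trans_le hl] using congrFun h n

theorem wcat_injective : Function.Injective wcat := by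
  intro α β h
  wlog hl : α.length ≤ β.length generalizing α β
  · exact (this h.symm (le_of_not_ge hl)).symm
  obtain ⟨u, rfl⟩ := prefix_of_wcat_eq (congrFun h fun _ => false) hl
  cases u with
  | nil => simp
  | cons a u =>
    have hcons := congrFun h fun _ => !a
    rw [wcat_append] at hcons
    simpa [wcat] using congrFun (wcat_right_injective α hcons) 0

theorem cone_nonempty (α : Addr) : (cone α).Nonempty := Set.range_nonempty _

theorem cone_subset_cone_of_prefix {α β : Addr} (h : α <+: β) : cone β ⊆ cone α := by
  obtain ⟨u, rfl⟩ := h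
  rintro _ ⟨w, rfl⟩
  exact ⟨wcat u w, (wcat_append α u w).symm⟩

theorem disjoint_cone_of_not_prefix {α β : Addr} (hl : α.length ≤ β.length) (h : ¬ α <+: β) :
    Disjoint (cone α) (cone β) := by
  rw [Set.disjoint_left]
  rintro _ ⟨w, rfl⟩ ⟨v, hv⟩
  exact h (prefix_of_wcat_eq hv.symm hl)

theorem disjoint_cone_of_length_eq {α β : Addr} (hl : α.length = β.length) (h : α ≠ β) :
    Disjoint (cone α) (cone β) :=
  disjoint_cone_of_not_prefix hl.le fun hp => h (hp.eq_of_length hl)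

theorem disjoint_cone_append {α β : Addr} (h : Disjoint (cone α) (cone β)) (u v : Addr) :
    Disjoint (cone (α ++ u)) (cone (β ++ v)) :=
  h.mono (cone_subset_cone_of_prefix (List.prefix_append α u))
    (cone_subset_cone_of_prefix (List.prefix_append β v))

theorem disjoint_cone_or {β γ δ : Addr} (h : Disjoint (cone β) (cone γ))
    (hβ : β.length ≤ δ.length) (hγ : γ.length ≤ δ.length) :
    Disjoint (cone β) (cone δ) ∨ Disjoint (cone γ) (cone δ) := by
  by_cases hβδ : β <+: δ
  · exact .inr (disjoint_cone_of_not_prefix hγ fun hγδ => (cone_nonempty δ).not_subset_empty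
      (h (cone_subset_cone_of_prefix hβδ) (cone_subset_cone_of_prefix hγδ)))
  · exact .inl (disjoint_cone_of_not_prefix hβ hβδ)

theorem iUnion_cone_of_length_eq (N : ℕ) :
    ⋃ α : {α : Addr // α.length = N}, cone α = Set.univ := by
  refine Set.eq_univ_of_forall fun x => Set.mem_iUnion.2
    ⟨⟨List.ofFn fun i : Fin N => x i, List.length_ofFn⟩, fun n => x (n + N), ?_⟩
  funext n
  by_cases h : n < N
  · simp [wcat, h]
  · simp [wcat, h, Nat.sub_add_cancel (not_lt.1 h)]

theorem exists_disjoint_cone_append {α β : Addr} (h : α ≠ β) :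
    ∃ u, Disjoint (cone (α ++ u)) (cone (β ++ u)) := by
  wlog hl : α.length ≤ β.length generalizing α β
  · obtain ⟨u, hu⟩ := this h.symm (le_of_not_ge hl)
    exact ⟨u, hu.symm⟩
  by_cases hp : α <+: β
  · obtain ⟨_ | ⟨a, v⟩, rfl⟩ := hp
    · simp at h
    · have hbranch : Disjoint (cone (α ++ [!a])) (cone (α ++ [a])) :=
        disjoint_cone_of_length_eq (by simp) (by simp)
      exact ⟨[!a], by simpa using disjoint_cone_append hbranch [] (v ++ [!a])⟩
  · exact ⟨[], by simpa using disjoint_cone_of_not_prefix hl hp⟩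

/-! ### Cofinitely many words -/

theorem cofinite_eq_comap_length {A : Type*} [Finite A] :
    (cofinite : Filter (List A)) = comap List.length atTop := by
  rw [← Nat.cofinite_eq_atTop]
  refine le_antisymm (Tendsto.cofinite_of_finite_preimage_singleton fun n => ?_).le_comap
    (comap_cofinite_le _)
  exact List.finite_length_eq A n

theorem eventually_cofinite_iff_length {A : Type*} [Finite A] {P : List A → Prop} :
    (∀ᶠ l in cofinite, P l) ↔ ∃ N, ∀ l : List A, N ≤ l.length → P l := by
  rw [cofinite_eq_comap_length]
  simpa using (atTop_basis.comap List.length).eventually_iff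

/-! ### The partial action on addresses -/

namespace actsOn

variable {g h : Equiv.Perm Cantor} {α β γ : Addr}

theorem append (hg : actsOn g α β) (u : Addr) : actsOn g (α ++ u) (β ++ u) := by
  intro w
  rw [wcat_append, wcat_append, hg]

theorem inv (hg : actsOn g α β) : actsOn g⁻¹ β α := fun w =>
  Equiv.Perm.inv_eq_iff_eq.2 (hg w).symm

theorem mul (hg : actsOn g β γ) (hh : actsOn h α β) : actsOn (g * h) α γ := fun w => by
  rw [Equiv.Perm.mul_apply, hh, hg]

theorem of_mul (hgh : actsOn (g * h) α γ) (hh : actsOn h α β) : actsOn g β γ := fun w => by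
  rw [← hh, ← Equiv.Perm.mul_apply, hgh]

theorem right_unique (hβ : actsOn g α β) (hγ : actsOn g α γ) : β = γ :=
  wcat_injective (funext fun w => (hβ w).symm.trans (hγ w))

theorem left_unique (hα : actsOn g α γ) (hβ : actsOn g β γ) : α = β :=
  hα.inv.right_unique hβ.inv

theorem image_cone (hg : actsOn g α β) : g '' cone α = cone β := by
  rw [cone, ← Set.range_comp, cone]
  exact congrArg Set.range (funext hg)

end actsOn

/-! ### Thompson's group -/

theorem isPrefixSubst_of_actsOn {ι : Type*} [Finite ι] {g : Equiv.Perm Cantor} {A B : ι → Addr}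
    (hA : Pairwise fun i j => Disjoint (cone (A i)) (cone (A j)))
    (hcover : ⋃ i, cone (A i) = Set.univ) (hg : ∀ i, actsOn g (A i) (B i)) :
    IsPrefixSubst g := by
  obtain ⟨n, ⟨e⟩⟩ := Finite.exists_equiv_fin ι
  have hcover' : ⋃ k, cone (A (e.symm k)) = Set.univ := by
    rw [e.symm.surjective.iUnion_comp fun i => cone (A i), hcover]
  refine ⟨n, A ∘ e.symm, B ∘ e.symm, fun i j hij => hA (e.symm.injective.ne hij), hcover',
    fun i j hij => ?_, ?_, fun i => hg (e.symm i)⟩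
  · simp only [Function.comp_apply, ← (hg _).image_cone]
    exact (Set.disjoint_image_iff g.injective).2 (hA (e.symm.injective.ne hij))
  · simp only [Function.comp_apply, ← (hg _).image_cone]
    rw [← Set.image_iUnion, hcover', Set.image_univ, g.range_eq_univ]

theorem IsPrefixSubst.eventually_exists_actsOn {g : Equiv.Perm Cantor} (hg : IsPrefixSubst g) :
    ∀ᶠ α in cofinite, ∃ β, actsOn g α β := by
  obtain ⟨n, A, B, -, hcover, -, -, hAB⟩ := hg
  refine eventually_cofinite_iff_length.2 ⟨∑ i, (A i).length, fun α hα => ?_⟩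
  obtain ⟨x, hx⟩ := cone_nonempty α
  obtain ⟨i, hi⟩ := Set.mem_iUnion.1 (hcover.symm ▸ Set.mem_univ x)
  have hlen : (A i).length ≤ α.length :=
    (Finset.single_le_sum_of_canonicallyOrdered (f := fun i => (A i).length)
      (Finset.mem_univ i)).trans hα
  obtain ⟨u, rfl⟩ : A i <+: α := by
    by_contra hp
    exact Set.disjoint_left.1 (disjoint_cone_of_not_prefix hlen hp) hi hx
  exact ⟨B i ++ u, actsOn.append (hAB i) u⟩

theorem isPrefixSubst_iff_eventually {g : Equiv.Perm Cantor} :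
    IsPrefixSubst g ↔ ∀ᶠ α in cofinite, ∃ β, actsOn g α β := by
  refine ⟨IsPrefixSubst.eventually_exists_actsOn, fun h => ?_⟩
  obtain ⟨N, hN⟩ := eventually_cofinite_iff_length.1 h
  have : Finite {α : Addr // α.length = N} := List.finite_length_eq Bool N
  choose B hB using fun α : {α : Addr // α.length = N} => hN α α.2.ge
  refine isPrefixSubst_of_actsOn (fun α β hαβ => ?_) (iUnion_cone_of_length_eq N) hB
  exact disjoint_cone_of_length_eq (α.2.trans β.2.symm) (Subtype.coe_injective.ne hαβ)

theorem eventually_actsOn_and {g : Equiv.Perm Cantor} {p : Addr → Prop}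
    (hg : ∀ᶠ α in cofinite, ∃ β, actsOn g α β) (hp : ∀ᶠ β in cofinite, p β) :
    ∀ᶠ α in cofinite, ∃ β, actsOn g α β ∧ p β := by
  have hbad : {α | ∃ β, ¬ p β ∧ actsOn g α β}.Finite := by
    have hfiber : ∀ β, {α | actsOn g α β}.Finite := fun β =>
      Set.Subsingleton.finite fun _ hα _ hα' => hα.left_unique hα'
    simpa [Set.iUnion_ofPred] using (eventually_cofinite.1 hp).biUnion fun β _ => hfiber β
  filter_upwards [hg, hbad.eventually_cofinite_notMem] with α ⟨β, hβ⟩ hα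
  exact ⟨β, hβ, by_contra fun hpβ => hα ⟨β, hpβ, hβ⟩⟩

namespace IsPrefixSubst

variable {g h : Equiv.Perm Cantor}

theorem one : IsPrefixSubst 1 :=
  isPrefixSubst_iff_eventually.2 (Eventually.of_forall fun α => ⟨α, fun _ => rfl⟩)

theorem mul (hg : IsPrefixSubst g) (hh : IsPrefixSubst h) : IsPrefixSubst (g * h) := by
  rw [isPrefixSubst_iff_eventually] at *
  refine (eventually_actsOn_and hh hg).mono ?_
  rintro α ⟨β, hβ, γ, hγ⟩
  exact ⟨γ, hγ.mul hβ⟩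

theorem inv (hg : IsPrefixSubst g) : IsPrefixSubst g⁻¹ := by
  obtain ⟨n, A, B, hA, hAcover, hB, hBcover, hAB⟩ := hg
  exact ⟨n, B, A, hB, hBcover, hA, hAcover, fun i => actsOn.inv (hAB i)⟩

end IsPrefixSubst

/-! ### Stabilizers of relations -/

namespace Stabilizes

variable {r : Addr → Addr → Prop} {g h : Equiv.Perm Cantor}

theorem one (r : Addr → Addr → Prop) : Stabilizes r 1 := by
  have hid : ∀ α, actsOn 1 α α := fun _ _ => rfl
  refine ⟨Set.univ, by simp, fun α _ => ⟨α, hid α⟩, fun α _ α' _ β β' hβ hβ' => ?_⟩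
  rw [(hid α).right_unique hβ, (hid α').right_unique hβ']

theorem mul (hg : Stabilizes r g) (hh : Stabilizes r h) : Stabilizes r (g * h) := by
  obtain ⟨S, hS, hSdef, hSr⟩ := hg
  obtain ⟨T, hT, hTdef, hTr⟩ := hh
  have hT' : ∀ᶠ α in cofinite, α ∈ T := hT
  refine ⟨{α | α ∈ T ∧ ∃ β, actsOn h α β ∧ β ∈ S},
    hT'.and (eventually_actsOn_and (hT'.mono hTdef) hS), ?_, ?_⟩
  · rintro α ⟨-, β, hαβ, hβS⟩
    obtain ⟨γ, hβγ⟩ := hSdef β hβS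
    exact ⟨γ, hβγ.mul hαβ⟩
  · rintro α ⟨hαT, β, hαβ, hβS⟩ α' ⟨hαT', β', hαβ', hβS'⟩ γ γ' hγ hγ'
    exact (hTr α hαT α' hαT' β β' hαβ hαβ').trans
      (hSr β hβS β' hβS' γ γ' (hγ.of_mul hαβ) (hγ'.of_mul hαβ'))

theorem inv (hs : Stabilizes r g) (hg : IsPrefixSubst g) : Stabilizes r g⁻¹ := by
  obtain ⟨S, hS, -, hSr⟩ := hs
  refine ⟨{β | ∃ α, actsOn g⁻¹ β α ∧ α ∈ S},
    eventually_actsOn_and hg.inv.eventually_exists_actsOn hS, fun β ⟨α, hα, _⟩ => ⟨α, hα⟩, ?_⟩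
  rintro β ⟨α, hα, hαS⟩ β' ⟨α', hα', hαS'⟩ _ _ hγ hγ'
  obtain rfl := hα.right_unique hγ
  obtain rfl := hα'.right_unique hγ'
  exact (hSr α hαS α' hαS' β β' (by simpa using hα.inv) (by simpa using hα'.inv)).symm

end Stabilizes

theorem isSubgroupSet_stabSet (r : Addr → Addr → Prop) : IsSubgroupSet (StabSet r) := by
  refine ⟨⟨.one, .one r⟩, fun g hg h hh => ⟨hg.1.mul hh.1, hg.2.mul hh.2⟩,
    fun g hg => ⟨hg.1.inv, hg.2.inv hg.1⟩⟩

/-! ### Coherent and reduced relations -/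

theorem Coherent.append {r : Addr → Addr → Prop} (hc : Coherent r) {α β : Addr} (h : r α β)
    (u : Addr) : r (α ++ u) (β ++ u) := by
  induction u generalizing α β with
  | nil => simpa using h
  | cons a u ih =>
    have ha : r (α ++ [a]) (β ++ [a]) := by
      cases a
      · exact (hc α β h).1
      · exact (hc α β h).2
    simpa using ih ha

theorem Reduced.of_forall_append {r : Addr → Addr → Prop} (hr : Reduced r) (N : ℕ) {α β : Addr}
    (h : ∀ u : Addr, u.length = N → r (α ++ u) (β ++ u)) : r α β := by
  induction N generalizing α β with
  | zero => simpa using h [] rfl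
  | succ N ih =>
    have hchild : ∀ a, r (α ++ [a]) (β ++ [a]) := fun a =>
      ih fun u hu => by simpa using h (a :: u) (by simp [hu])
    exact hr α β (hchild false) (hchild true)

/-- Invariance of `r` under the partial action of Thompson's group `V` on addresses: every element
of `V` preserves `r` at all addresses where it is defined, without finite exceptional set. -/
def VInvariant (r : Addr → Addr → Prop) : Prop :=
  ∀ ⦃g : Equiv.Perm Cantor⦄, IsPrefixSubst g → ∀ ⦃α α' β β' : Addr⦄,
    actsOn g α β → actsOn g α' β' → (r α α' ↔ r β β')

theorem Stabilizes.rel_iff {r : Addr → Addr → Prop} (hc : Coherent r) (hr : Reduced r)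
    {g : Equiv.Perm Cantor} (hs : Stabilizes r g) {α α' β β' : Addr} (hβ : actsOn g α β)
    (hβ' : actsOn g α' β') : r α α' ↔ r β β' := by
  obtain ⟨S, hS, -, hSr⟩ := hs
  obtain ⟨N, hN⟩ := eventually_cofinite_iff_length.1 (show ∀ᶠ α in cofinite, α ∈ S from hS)
  have happend : ∀ u : Addr, u.length = N → (r (α ++ u) (α' ++ u) ↔ r (β ++ u) (β' ++ u)) :=
    fun u hu => hSr _ (hN _ (by simp [hu])) _ (hN _ (by simp [hu])) _ _
      (hβ.append u) (hβ'.append u)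
  exact ⟨fun h => hr.of_forall_append N fun u hu => (happend u hu).1 (hc.append h u),
    fun h => hr.of_forall_append N fun u hu => (happend u hu).2 (hc.append h u)⟩

theorem vInvariant_of_vSet_subset_stabSet {r : Addr → Addr → Prop} (hc : Coherent r)
    (hr : Reduced r) (h : VSet ⊆ StabSet r) : VInvariant r :=
  fun _ hg _ _ _ _ hβ hβ' => (h hg).2.rel_iff hc hr hβ hβ'

/-! ### Swapping two cones -/

/-- The permutation exchanging two disjoint cones `β𝔠` and `γ𝔠` by prefix substitution and fixing
all other points: the flip of two copies of Cantor space, transported to `β𝔠 ∪ γ𝔠`. -/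
noncomputable def swapCones {β γ : Addr} (h : Disjoint (cone β) (cone γ)) : Equiv.Perm Cantor :=
  Equiv.Perm.viaEmbedding (Equiv.sumComm Cantor Cantor)
    ⟨Sum.elim (wcat β) (wcat γ), (wcat_right_injective β).sumElim (wcat_right_injective γ)
      fun w v => h.ne_of_mem (Set.mem_range_self w) (Set.mem_range_self v)⟩

section SwapCones

variable {β γ : Addr} (h : Disjoint (cone β) (cone γ))

theorem actsOn_swapCones_left : actsOn (swapCones h) β γ := fun w =>
  Equiv.Perm.viaEmbedding_apply _ _ (Sum.inl w)

theorem actsOn_swapCones_right : actsOn (swapCones h) γ β := fun w =>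
  Equiv.Perm.viaEmbedding_apply _ _ (Sum.inr w)

theorem actsOn_swapCones_of_disjoint {δ : Addr} (hβ : Disjoint (cone β) (cone δ))
    (hγ : Disjoint (cone γ) (cone δ)) : actsOn (swapCones h) δ δ := by
  refine fun w => Equiv.Perm.viaEmbedding_apply_of_notMem _ _ _ ?_
  rintro ⟨v | v, hv⟩
  · exact hβ.ne_of_mem (Set.mem_range_self v) (Set.mem_range_self w) hv
  · exact hγ.ne_of_mem (Set.mem_range_self v) (Set.mem_range_self w) hv

theorem isPrefixSubst_swapCones : IsPrefixSubst (swapCones h) := by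
  refine isPrefixSubst_iff_eventually.2 (eventually_cofinite_iff_length.2
    ⟨max β.length γ.length, fun α hα => ?_⟩)
  by_cases hβ : β <+: α
  · obtain ⟨u, rfl⟩ := hβ
    exact ⟨γ ++ u, (actsOn_swapCones_left h).append u⟩
  by_cases hγ : γ <+: α
  · obtain ⟨u, rfl⟩ := hγ
    exact ⟨β ++ u, (actsOn_swapCones_right h).append u⟩
  exact ⟨α, actsOn_swapCones_of_disjoint h
    (disjoint_cone_of_not_prefix (le_of_max_le_left hα) hβ)
    (disjoint_cone_of_not_prefix (le_of_max_le_right hα) hγ)⟩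

end SwapCones

/-! ### Invariant relations -/

namespace VInvariant

variable {r : Addr → Addr → Prop}

theorem antisymmRel_of_disjoint (hV : VInvariant r) {α β δ : Addr} (h : r α β)
    (hαβ : Disjoint (cone α) (cone β)) (hαδ : Disjoint (cone α) (cone δ))
    (hβδ : Disjoint (cone β) (cone δ)) : AntisymmRel r α δ := by
  have hrel : r α δ := (hV (isPrefixSubst_swapCones hβδ)
    (actsOn_swapCones_of_disjoint hβδ hαβ.symm hαδ.symm) (actsOn_swapCones_left hβδ)).1 h
  exact ⟨hrel, (hV (isPrefixSubst_swapCones hαδ)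
    (actsOn_swapCones_left hαδ) (actsOn_swapCones_right hαδ)).1 hrel⟩

theorem antisymmRel_of_length_le [IsTrans Addr r] (hV : VInvariant r) {a b c δ : Addr}
    (h : r a b) (hab : Disjoint (cone a) (cone b)) (hac : Disjoint (cone a) (cone c))
    (hbc : Disjoint (cone b) (cone c)) (ha : a.length ≤ δ.length) (hb : b.length ≤ δ.length)
    (hc : c.length ≤ δ.length) : AntisymmRel r a δ := by
  have rac : AntisymmRel r a c := hV.antisymmRel_of_disjoint h hab hac hbc
  have rab : AntisymmRel r a b := hV.antisymmRel_of_disjoint rac.1 hac hab hbc.symm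
  have rbc : AntisymmRel r b c := rab.symm.trans rac
  have of_bc (hbδ : Disjoint (cone b) (cone δ)) (hcδ : Disjoint (cone c) (cone δ)) :
      AntisymmRel r a δ :=
    rab.trans (hV.antisymmRel_of_disjoint rbc.1 hbc hbδ hcδ)
  rcases disjoint_cone_or hbc hb hc with hbδ | hcδ
  · rcases disjoint_cone_or hac ha hc with haδ | hcδ
    · exact hV.antisymmRel_of_disjoint rab.1 hab haδ hbδ
    · exact of_bc hbδ hcδ
  · rcases disjoint_cone_or hab ha hb with haδ | hbδ
    · exact hV.antisymmRel_of_disjoint rac.1 hac haδ hcδ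
    · exact of_bc hbδ hcδ

theorem rel_of_rel_of_ne [IsTrans Addr r] (hV : VInvariant r) (hc : Coherent r) (hr : Reduced r)
    {α β : Addr} (h : r α β) (hne : α ≠ β) (δ ε : Addr) : r δ ε := by
  obtain ⟨u, hu⟩ := exists_disjoint_cone_append hne
  have hsplit : Disjoint (cone (α ++ u ++ [false])) (cone (α ++ u ++ [true])) :=
    disjoint_cone_of_length_eq (by simp) (by simp)
  have hlong : ∀ η : Addr, α.length + β.length + u.length + 1 ≤ η.length →
      AntisymmRel r (α ++ u ++ [false]) η := fun η hη =>
    hV.antisymmRel_of_length_le (hc.append (hc.append h u) [false])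
      (disjoint_cone_append hu _ _) hsplit (disjoint_cone_append hu.symm _ _)
      (by simp; omega) (by simp; omega) (by simp; omega)
  refine hr.of_forall_append (α.length + β.length + u.length + 1) fun v hv => ?_
  have hδ := hlong (δ ++ v) (by simp [hv])
  have hε := hlong (ε ++ v) (by simp [hv])
  exact (hδ.symm.trans hε).1

end VInvariant

theorem stabSet_proper_general (r : Addr → Addr → Prop) [IsTrans Addr r] (hc : Coherent r)
    (hr : Reduced r) (hnontrivial : ∃ α β : Addr, r α β ∧ α ≠ β)
    (hnonuniversal : ∃ α β : Addr, ¬ r α β) :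
    IsSubgroupSet (StabSet r) ∧ StabSet r ⊂ VSet := by
  refine ⟨isSubgroupSet_stabSet r, fun g hg => hg.1, fun hV => ?_⟩
  obtain ⟨α, β, hrel, hne⟩ := hnontrivial
  obtain ⟨δ, ε, hnrel⟩ := hnonuniversal
  exact hnrel ((vInvariant_of_vSet_subset_stabSet hc hr hV).rel_of_rel_of_ne hc hr hrel hne δ ε)

/-- If the equivalence relation of a type system is neither the
trivial relation nor the universal relation, then `Stab_V(𝒫)` is a proper subgroup of
Thompson's group `V`. -/
theorem stabSet_proper (r : Addr → Addr → Prop) (hts : IsTypeSystem r)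
    (hnontrivial : ∃ α β : Addr, r α β ∧ α ≠ β)
    (hnonuniversal : ∃ α β : Addr, ¬ r α β) :
    IsSubgroupSet (StabSet r) ∧ StabSet r ⊂ VSet := by
  have : IsTrans Addr r := ⟨fun _ _ _ => hts.1.trans⟩
  exact stabSet_proper_general r hts.2.1 hts.2.2 hnontrivial hnonuniversal
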